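/- arXiv:2012.15595 — 2 statements merged into one kernel-verified Lean document; each statement's English description precedes it below -/
import Mathlib

section
/- Let p ≥ 2 and let g : ℝ^n × ℝ^m → ℝ be p times continuously differentiable with L_p-Lipschitz p-th derivative, and let M ≥ L_p. Fix (x,y) ∈ ℝ^n × ℝ^m and define the regularized Taylor model Ω_{(x,y),p,M}(x̂,ŷ) = Φ_{(x,y),p}(x̂,ŷ) + (M(√2)^{p−1}/(p+1)!)‖x̂ − x‖₂^{p+1} − (M(√2)^{p−1}/(p+1)!)‖ŷ − y‖₂^{p+1}, where Φ_{(x,y),p} is the p-th order Taylor polynomial of g at (x,y). If (x̃,ỹ) is a stationary point of Ω_{(x,y),p,M}, i.e. ∇Ω_{(x,y),p,M}(x̃,ỹ) = 0, then ‖∇g(x̃,ỹ)‖₂² ≤ 2^{p+1} M² (‖x̃ − x‖₂² + ‖ỹ − y‖₂²)^p. -/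
/-- The point of `ℝⁿ × ℝᵐ` (with the Euclidean/`L²` product structure) with coordinates
`(x, y)`. -/
noncomputable def mkZ {n m : ℕ} (x : EuclideanSpace ℝ (Fin n)) (y : EuclideanSpace ℝ (Fin m)) :
    WithLp 2 (EuclideanSpace ℝ (Fin n) × EuclideanSpace ℝ (Fin m)) :=
  (WithLp.equiv 2 (EuclideanSpace ℝ (Fin n) × EuclideanSpace ℝ (Fin m))).symm (x, y)

/-- The `p`-th order Taylor polynomial `Φ_{z,p}(ẑ) = Σ_{i=0}^p (1/i!) ∇ⁱ g(z)[ẑ − z]ⁱ`. -/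
noncomputable def taylorPoly {n m : ℕ} (p : ℕ)
    (g : WithLp 2 (EuclideanSpace ℝ (Fin n) × EuclideanSpace ℝ (Fin m)) → ℝ)
    (z zh : WithLp 2 (EuclideanSpace ℝ (Fin n) × EuclideanSpace ℝ (Fin m))) : ℝ :=
  ∑ i ∈ Finset.range (p + 1),
    (1 / (Nat.factorial i : ℝ)) * iteratedFDeriv ℝ i g z (fun _ => zh - z)

/-- The regularized Taylor model
`Ω_{(x,y),p,M}(x̂,ŷ) = Φ_{(x,y),p}(x̂,ŷ) + (M(√2)^{p−1}/(p+1)!)‖x̂ − x‖^{p+1}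
− (M(√2)^{p−1}/(p+1)!)‖ŷ − y‖^{p+1}`. -/
noncomputable def omegaModel {n m : ℕ} (p : ℕ) (M : ℝ)
    (g : WithLp 2 (EuclideanSpace ℝ (Fin n) × EuclideanSpace ℝ (Fin m)) → ℝ)
    (x : EuclideanSpace ℝ (Fin n)) (y : EuclideanSpace ℝ (Fin m)) :
    WithLp 2 (EuclideanSpace ℝ (Fin n) × EuclideanSpace ℝ (Fin m)) → ℝ :=
  fun zh =>
    taylorPoly p g (mkZ x y) zh
      + M * Real.sqrt 2 ^ (p - 1) / (Nat.factorial (p + 1) : ℝ)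
          * ‖(WithLp.equiv 2 (EuclideanSpace ℝ (Fin n) × EuclideanSpace ℝ (Fin m)) zh).1 - x‖ ^ (p + 1)
      - M * Real.sqrt 2 ^ (p - 1) / (Nat.factorial (p + 1) : ℝ)
          * ‖(WithLp.equiv 2 (EuclideanSpace ℝ (Fin n) × EuclideanSpace ℝ (Fin m)) zh).2 - y‖ ^ (p + 1)

/-!
With `Φ` the Taylor polynomial of `g` at `z = (x, y)`, write `Ω = Φ + c ρ` where
`ρ(x̂, ŷ) = ‖x̂ - x‖ ^ (p + 1) - ‖ŷ - y‖ ^ (p + 1)`. At a stationary point `w` of `Ω`,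
`∇g(w) = (∇g(w) - ∇Φ(w)) - c ∇ρ(w)`. Since `∇Φ` is the Taylor polynomial of order `p - 1` of `∇g`,
whose derivative of order `p - 1` is `L`-Lipschitz, the first term is at most
`L ‖w - z‖ ^ p / p!`. The two components of `∇ρ(w)` are orthogonal, so that the sign of the second
one does not matter and `‖∇ρ(w)‖ ≤ (p + 1) ‖w - z‖ ^ p`.
-/

open Set
open scoped NNReal Nat

universe u v

section Taylor

variable {E : Type u} {F : Type v} [NormedAddCommGroup E] [NormedSpace ℝ E]
  [NormedAddCommGroup F] [NormedSpace ℝ F]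

/-- The Taylor polynomial of order `n` of `f` at `z`, as a function of the point `w` and not of the
increment `w - z`. -/
noncomputable def taylorPolynomial (n : ℕ) (f : E → F) (z w : E) : F :=
  ∑ i ∈ Finset.range (n + 1), (1 / (i ! : ℝ)) • iteratedFDeriv ℝ i f z (fun _ => w - z)

lemma taylorPolynomial_zero (f : E → F) (z w : E) : taylorPolynomial 0 f z w = f z := by
  simp [taylorPolynomial]

lemma taylorPolynomial_succ (n : ℕ) (f : E → F) (z w : E) :
    taylorPolynomial (n + 1) f z w = taylorPolynomial n f z w +
      (1 / ((n + 1)! : ℝ)) • iteratedFDeriv ℝ (n + 1) f z (fun _ => w - z) :=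
  Finset.sum_range_succ _ _

lemma taylorPolynomial_self (n : ℕ) (f : E → F) (z : E) : taylorPolynomial n f z z = f z := by
  induction n with
  | zero => exact taylorPolynomial_zero f z z
  | succ n ih =>
    rw [taylorPolynomial_succ, ih, sub_self,
      (iteratedFDeriv ℝ (n + 1) f z).map_coord_zero 0 rfl, smul_zero, add_zero]

lemma fderiv_fderiv_apply_apply_comm {f : E → F} (hf : ContDiff ℝ 2 f) (z v h : E) :
    fderiv ℝ (fun y => fderiv ℝ f y v) z h = fderiv ℝ (fun y => fderiv ℝ f y h) z v := by
  have hf' : DifferentiableAt ℝ (fderiv ℝ f) z :=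
    (hf.fderiv_right (m := 1) le_rfl).differentiable one_ne_zero z
  have hsymm : IsSymmSndFDerivAt ℝ f z := hf.contDiffAt.isSymmSndFDerivAt (by simp)
  simpa [fderiv_clm_apply hf' (differentiableAt_const _)] using hsymm h v

lemma iteratedFDeriv_succ_update_const {n : ℕ} {f : E → F} (hf : ContDiff ℝ (n + 1) f) (z h v : E)
    (j : Fin (n + 1)) :
    iteratedFDeriv ℝ (n + 1) f z (Function.update (fun _ => h) j v) =
      iteratedFDeriv ℝ n (fderiv ℝ f) z (fun _ => h) v := by
  induction n generalizing f with
  | zero => simp [Fin.fin_one_eq_zero j]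
  | succ n ih =>
    have hf' : ContDiff ℝ (n + 1) (fderiv ℝ f) := hf.fderiv_right le_rfl
    have hdir (u : E) : ContDiff ℝ (n + 1) fun y => fderiv ℝ f y u := hf'.clm_apply contDiff_const
    have hdir' (u : E) : ContDiff ℝ n (fderiv ℝ fun y => fderiv ℝ f y u) :=
      (hdir u).fderiv_right le_rfl
    rw [iteratedFDeriv_succ_apply_right]
    induction j using Fin.lastCases with
    | last => simp only [Fin.init_update_last, Function.update_self]; rfl
    | cast j =>
      rw [Fin.init_update_castSucc, Function.update_of_ne (Fin.castSucc_lt_last j).ne']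
      calc iteratedFDeriv ℝ (n + 1) (fderiv ℝ f) z (Function.update (fun _ => h) j v) h
          = iteratedFDeriv ℝ (n + 1) (fun y => fderiv ℝ f y h) z
              (Function.update (fun _ => h) j v) :=
            (iteratedFDeriv_clm_apply_const_apply hf' (by norm_cast)).symm
        _ = iteratedFDeriv ℝ n (fderiv ℝ fun y => fderiv ℝ f y h) z (fun _ => h) v :=
            ih (hdir h) j
        _ = iteratedFDeriv ℝ n (fun y => fderiv ℝ (fun y => fderiv ℝ f y h) y v) z fun _ => h :=
            (iteratedFDeriv_clm_apply_const_apply (hdir' h) le_rfl).symm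
        _ = iteratedFDeriv ℝ n (fun y => fderiv ℝ (fun y => fderiv ℝ f y v) y h) z fun _ => h := by
            congr 2 with y
            exact fderiv_fderiv_apply_apply_comm (hf.of_le (by norm_cast; omega)) y h v
        _ = iteratedFDeriv ℝ n (fderiv ℝ fun y => fderiv ℝ f y v) z (fun _ => h) h :=
            iteratedFDeriv_clm_apply_const_apply (hdir' v) le_rfl
        _ = iteratedFDeriv ℝ (n + 1) (fun y => fderiv ℝ f y v) z fun _ => h :=
            (iteratedFDeriv_succ_apply_right fun _ => h).symm
        _ = iteratedFDeriv ℝ (n + 1) (fderiv ℝ f) z (fun _ => h) v :=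
            iteratedFDeriv_clm_apply_const_apply hf' (by norm_cast)

lemma hasFDerivAt_iteratedFDeriv_sub_const {n : ℕ} {f : E → F} (hf : ContDiff ℝ (n + 1) f)
    (z w : E) :
    HasFDerivAt (fun u => iteratedFDeriv ℝ (n + 1) f z (fun _ => u - z))
      ((n + 1 : ℝ) • iteratedFDeriv ℝ n (fderiv ℝ f) z (fun _ => w - z)) w := by
  have h := HasFDerivAt.multilinear_comp (iteratedFDeriv ℝ (n + 1) f z)
    (g := fun _ u => u - z) (fun _ => (hasFDerivAt_id w).sub_const z)
  convert h using 1
  ext v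
  simp [ContinuousMultilinearMap.toContinuousLinearMap, iteratedFDeriv_succ_update_const hf,
    ← Nat.cast_smul_eq_nsmul ℝ]

lemma hasFDerivAt_taylorPolynomial_succ {n : ℕ} {f : E → F} (hf : ContDiff ℝ (n + 1) f)
    (z w : E) :
    HasFDerivAt (taylorPolynomial (n + 1) f z) (taylorPolynomial n (fderiv ℝ f) z w) w := by
  have hterm (k : ℕ) (hk : ContDiff ℝ (k + 1) f) :
      HasFDerivAt (fun u => (1 / ((k + 1)! : ℝ)) • iteratedFDeriv ℝ (k + 1) f z (fun _ => u - z))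
        ((1 / (k ! : ℝ)) • iteratedFDeriv ℝ k (fderiv ℝ f) z (fun _ => w - z)) w := by
    have hcoeff : 1 / (k ! : ℝ) = 1 / ((k + 1)! : ℝ) * (k + 1) := by
      rw [Nat.factorial_succ]
      push_cast
      field_simp
    rw [hcoeff, mul_smul]
    exact (hasFDerivAt_iteratedFDeriv_sub_const hk z w).const_smul _
  induction n with
  | zero =>
    rw [funext (taylorPolynomial_succ 0 f z), taylorPolynomial_zero]
    simpa [taylorPolynomial_zero] using (hterm 0 hf).const_add (f z)
  | succ n ih =>
    rw [funext (taylorPolynomial_succ (n + 1) f z), taylorPolynomial_succ]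
    exact (ih (hf.of_le (by norm_cast; omega))).add (hterm (n + 1) hf)

lemma norm_le_of_norm_fderiv_le_mul_pow {R : E → F} (hR : Differentiable ℝ R) {z : E} (hz : R z = 0)
    {C : ℝ} {n : ℕ} (hR' : ∀ u, ‖fderiv ℝ R u‖ ≤ C * ‖u - z‖ ^ n) (w : E) :
    ‖R w‖ ≤ C / (n + 1) * ‖w - z‖ ^ (n + 1) := by
  set h := w - z with h_def
  have hline (t : ℝ) : HasDerivAt (fun t : ℝ => R (z + t • h)) (fderiv ℝ R (z + t • h) h) t := by
    have hseg : HasDerivAt (fun t : ℝ => z + t • h) h t := by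
      simpa using ((hasDerivAt_id t).smul_const h).const_add z
    exact (hR _).hasFDerivAt.comp_hasDerivAt t hseg
  have hB (t : ℝ) : HasDerivAt (fun t => C / (n + 1) * ‖h‖ ^ (n + 1) * t ^ (n + 1))
      (C * ‖h‖ ^ (n + 1) * t ^ n) t := by
    refine ((hasDerivAt_pow (n + 1) t).const_mul (C / (n + 1) * ‖h‖ ^ (n + 1))).congr_deriv ?_
    rw [Nat.add_sub_cancel]
    push_cast
    field_simp
  have hbound (t : ℝ) (ht : t ∈ Ico (0 : ℝ) 1) :
      ‖fderiv ℝ R (z + t • h) h‖ ≤ C * ‖h‖ ^ (n + 1) * t ^ n :=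
    calc ‖fderiv ℝ R (z + t • h) h‖ ≤ C * ‖z + t • h - z‖ ^ n * ‖h‖ :=
          ContinuousLinearMap.le_of_opNorm_le _ (hR' _) _
      _ = C * ‖h‖ ^ (n + 1) * t ^ n := by
          rw [add_sub_cancel_left, norm_smul, Real.norm_of_nonneg ht.1]
          ring
  have h01 := image_norm_le_of_norm_deriv_right_le_deriv_boundary
    (fun t _ => (hline t).continuousAt.continuousWithinAt)
    (fun t _ => (hline t).hasDerivWithinAt) (by simp [hz]) hB hbound
    (right_mem_Icc.2 zero_le_one)
  simpa [h_def] using h01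

lemma lipschitzWith_iteratedFDeriv_fderiv {K : ℝ≥0} {n : ℕ} {f : E → F}
    (hf : LipschitzWith K (iteratedFDeriv ℝ (n + 1) f)) :
    LipschitzWith K (iteratedFDeriv ℝ n (fderiv ℝ f)) := by
  have hcurry : iteratedFDeriv ℝ (n + 1) f =
      (continuousMultilinearCurryRightEquiv' ℝ n E F).symm ∘ iteratedFDeriv ℝ n (fderiv ℝ f) :=
    funext fun _ => iteratedFDeriv_succ_eq_comp_right
  rw [hcurry] at hf
  exact ((continuousMultilinearCurryRightEquiv' ℝ n E F).symm.isometry.lipschitzWith_iff K).1 hf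

end Taylor

section TaylorRemainder

variable {E : Type u} [NormedAddCommGroup E] [NormedSpace ℝ E]

/-- The codomain lives in a universe above that of `E` because the induction passes from `F` to
`E →L[ℝ] F`. -/
lemma norm_sub_taylorPolynomial_le {F : Type max u v} [NormedAddCommGroup F] [NormedSpace ℝ F]
    {K : ℝ≥0} {n : ℕ} {f : E → F} (hf : ContDiff ℝ n f)
    (hK : LipschitzWith K (iteratedFDeriv ℝ n f)) (z w : E) :
    ‖f w - taylorPolynomial n f z w‖ ≤ K / (n + 1)! * ‖w - z‖ ^ (n + 1) := by
  induction n generalizing F w with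
  | zero =>
    have hf₀ : LipschitzWith K f := by
      rw [iteratedFDeriv_zero_eq_comp] at hK
      exact ((continuousMultilinearCurryFin0 ℝ E F).symm.isometry.lipschitzWith_iff K).1 hK
    simpa [taylorPolynomial_zero] using hf₀.norm_sub_le w z
  | succ n ih =>
    have hf' : ContDiff ℝ n (fderiv ℝ f) := hf.fderiv_right (by norm_cast)
    have hR (u : E) : HasFDerivAt (fun u => f u - taylorPolynomial (n + 1) f z u)
        (fderiv ℝ f u - taylorPolynomial n (fderiv ℝ f) z u) u :=
      (hf.differentiable (by simp) u).hasFDerivAt.sub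
        (hasFDerivAt_taylorPolynomial_succ (mod_cast hf) z u)
    have hR' (u : E) : ‖fderiv ℝ (fun u => f u - taylorPolynomial (n + 1) f z u) u‖ ≤
        K / (n + 1)! * ‖u - z‖ ^ (n + 1) :=
      (hR u).fderiv ▸ ih hf' (lipschitzWith_iteratedFDeriv_fderiv hK) u
    convert norm_le_of_norm_fderiv_le_mul_pow (fun u => (hR u).differentiableAt)
      (by simp [taylorPolynomial_self]) hR' w using 2
    rw [Nat.factorial_succ (n + 1)]
    push_cast
    field_simp

lemma norm_fderiv_sub_taylorPolynomial_le {F : Type v} [NormedAddCommGroup F] [NormedSpace ℝ F]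
    {K : ℝ≥0} {n : ℕ} {f : E → F} (hf : ContDiff ℝ (n + 1) f)
    (hK : LipschitzWith K (iteratedFDeriv ℝ (n + 1) f)) (z w : E) :
    ‖fderiv ℝ f w - taylorPolynomial n (fderiv ℝ f) z w‖ ≤ K / (n + 1)! * ‖w - z‖ ^ (n + 1) :=
  norm_sub_taylorPolynomial_le.{u, v} (hf.fderiv_right le_rfl)
    (lipschitzWith_iteratedFDeriv_fderiv hK) z w

end TaylorRemainder

section Gradient

variable {H : Type*} [NormedAddCommGroup H] [InnerProductSpace ℝ H]

lemma hasFDerivAt_norm_pow_add_two (n : ℕ) (x : H) :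
    HasFDerivAt (fun x : H => ‖x‖ ^ (n + 2)) (((n + 2 : ℝ) * ‖x‖ ^ n) • innerSL ℝ x) x := by
  have h := hasFDerivAt_norm_rpow x (p := (n + 2 : ℕ)) (by norm_cast; omega)
  simp only [Real.rpow_natCast] at h
  rwa [Nat.cast_add, Nat.cast_two, add_sub_cancel_right, Real.rpow_natCast] at h

lemma norm_gradient_le_of_gradient_taylorPolynomial_add_eq_zero [CompleteSpace H] {n : ℕ}
    {L : ℝ≥0} {g R : H → ℝ} (hg : ContDiff ℝ (n + 1) g)
    (hL : LipschitzWith L (iteratedFDeriv ℝ (n + 1) g)) {z w r : H} (hR : HasGradientAt R r w)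
    {c : ℝ} (hw : gradient (fun u => taylorPolynomial (n + 1) g z u + c * R u) w = 0) :
    ‖gradient g w‖ ≤ L / (n + 1)! * ‖w - z‖ ^ (n + 1) + |c| * ‖r‖ := by
  set T := taylorPolynomial n (fderiv ℝ g) z w
  set R' := InnerProductSpace.toDual ℝ H r
  have hmodel : T + c • R' = 0 := by
    have h := (hasFDerivAt_taylorPolynomial_succ hg z w).add (hR.hasFDerivAt.const_mul c)
    exact h.fderiv.symm.trans ((map_eq_zero_iff _ (LinearIsometryEquiv.injective _)).1 hw)
  calc ‖gradient g w‖ = ‖fderiv ℝ g w‖ := LinearIsometryEquiv.norm_map _ _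
    _ = ‖(fderiv ℝ g w - T) - c • R'‖ := by rw [sub_sub, hmodel, sub_zero]
    _ ≤ ‖fderiv ℝ g w - T‖ + ‖c • R'‖ := norm_sub_le _ _
    _ ≤ L / (n + 1)! * ‖w - z‖ ^ (n + 1) + |c| * ‖r‖ := by
        rw [norm_smul, LinearIsometryEquiv.norm_map, Real.norm_eq_abs]
        gcongr
        exact norm_fderiv_sub_taylorPolynomial_le hg hL z w

end Gradient

section Saddle

variable {X Y : Type*} [NormedAddCommGroup X] [InnerProductSpace ℝ X]
  [NormedAddCommGroup Y] [InnerProductSpace ℝ Y]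

/-- The regularization term centered at `z = (x, y)` of the model of a saddle point problem:
convex in the variable to be minimized, concave in the variable to be maximized. -/
noncomputable def saddleRegularizer (k : ℕ) (z w : WithLp 2 (X × Y)) : ℝ :=
  ‖w.fst - z.fst‖ ^ k - ‖w.snd - z.snd‖ ^ k

lemma hasGradientAt_saddleRegularizer [CompleteSpace X] [CompleteSpace Y] (n : ℕ)
    (z w : WithLp 2 (X × Y)) :
    HasGradientAt (saddleRegularizer (n + 2) z)
      ((n + 2 : ℝ) • WithLp.toLp 2 (‖w.fst - z.fst‖ ^ n • (w.fst - z.fst),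
        -(‖w.snd - z.snd‖ ^ n • (w.snd - z.snd)))) w := by
  have hfst := (hasFDerivAt_norm_pow_add_two n (w.fst - z.fst)).comp w
    ((WithLp.fstL 2 ℝ X Y).hasFDerivAt.sub_const z.fst)
  have hsnd := (hasFDerivAt_norm_pow_add_two n (w.snd - z.snd)).comp w
    ((WithLp.sndL 2 ℝ X Y).hasFDerivAt.sub_const z.snd)
  rw [hasGradientAt_iff_hasFDerivAt]
  refine (hfst.sub hsnd).congr_fderiv (ContinuousLinearMap.ext fun v => ?_)
  simp only [sub_apply, smul_apply, ContinuousLinearMap.comp_apply, WithLp.fstL_apply,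
    WithLp.sndL_apply, coe_innerSL_apply, smul_eq_mul, map_smul,
    InnerProductSpace.toDual_apply_apply, WithLp.prod_inner_apply, WithLp.ofLp_fst,
    WithLp.ofLp_snd, inner_smul_left, inner_neg_left, Real.ringHom_apply]
  ring

lemma norm_toLp_pow_smul_le (n : ℕ) (u : WithLp 2 (X × Y)) :
    ‖WithLp.toLp 2 (‖u.fst‖ ^ n • u.fst, -(‖u.snd‖ ^ n • u.snd))‖ ≤ ‖u‖ ^ (n + 1) := by
  refine le_of_sq_le_sq ?_ (by positivity)
  calc ‖WithLp.toLp 2 (‖u.fst‖ ^ n • u.fst, -(‖u.snd‖ ^ n • u.snd))‖ ^ 2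
      = (‖u.fst‖ ^ n * ‖u.fst‖) ^ 2 + (‖u.snd‖ ^ n * ‖u.snd‖) ^ 2 := by
        simp [WithLp.prod_norm_sq_eq_of_L2, norm_smul]
    _ ≤ (‖u‖ ^ n * ‖u.fst‖) ^ 2 + (‖u‖ ^ n * ‖u.snd‖) ^ 2 := by
        gcongr
        · exact WithLp.norm_fst_le _ u
        · exact WithLp.norm_snd_le _ u
    _ = (‖u‖ ^ n) ^ 2 * ‖u‖ ^ 2 := by rw [WithLp.prod_norm_sq_eq_of_L2 u]; ring
    _ = (‖u‖ ^ (n + 1)) ^ 2 := by ring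

/-- The Taylor polynomial of order `p` of `g` at `z`, regularized in saddle form with coefficient
`c`; the model `Ω_{z,p,M}` is the case `c = M (√2)^(p-1) / (p+1)!`. -/
noncomputable def saddleTaylorModel (p : ℕ) (c : ℝ) (g : WithLp 2 (X × Y) → ℝ)
    (z w : WithLp 2 (X × Y)) : ℝ :=
  taylorPolynomial p g z w + c * ‖w.fst - z.fst‖ ^ (p + 1) - c * ‖w.snd - z.snd‖ ^ (p + 1)

lemma saddleTaylorModel_eq_add_mul_saddleRegularizer (p : ℕ) (c : ℝ) (g : WithLp 2 (X × Y) → ℝ)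
    (z : WithLp 2 (X × Y)) :
    saddleTaylorModel p c g z =
      fun w => taylorPolynomial p g z w + c * saddleRegularizer (p + 1) z w := by
  ext w
  rw [saddleTaylorModel, saddleRegularizer]
  ring

lemma norm_gradient_le_of_gradient_saddleTaylorModel_eq_zero [CompleteSpace X] [CompleteSpace Y]
    {n : ℕ} {L : ℝ≥0} {c : ℝ} {g : WithLp 2 (X × Y) → ℝ} (hg : ContDiff ℝ (n + 1) g)
    (hL : LipschitzWith L (iteratedFDeriv ℝ (n + 1) g)) {z w : WithLp 2 (X × Y)}
    (hw : gradient (saddleTaylorModel (n + 1) c g z) w = 0) :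
    ‖gradient g w‖ ≤ (L / (n + 1)! + |c| * (n + 2)) * ‖w - z‖ ^ (n + 1) := by
  rw [saddleTaylorModel_eq_add_mul_saddleRegularizer] at hw
  refine (norm_gradient_le_of_gradient_taylorPolynomial_add_eq_zero hg hL
    (hasGradientAt_saddleRegularizer n z w) hw).trans ?_
  rw [norm_smul, Real.norm_of_nonneg (by positivity : (0 : ℝ) ≤ n + 2), add_mul _ _ (_ ^ _),
    mul_assoc |c|]
  gcongr
  exact norm_toLp_pow_smul_le n (w - z)

lemma add_saddle_coeff_le {n : ℕ} {L : ℝ≥0} {M : ℝ} (hLM : L ≤ M) :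
    L / (n + 1)! + |M * √2 ^ n / (n + 2)!| * (n + 2) ≤ 2 * √2 ^ n * (M / (n + 1)!) := by
  have hM : 0 ≤ M := L.coe_nonneg.trans hLM
  have hcoeff : |M * √2 ^ n / (n + 2)!| * (n + 2) = √2 ^ n * (M / (n + 1)!) := by
    rw [abs_of_nonneg (by positivity), Nat.factorial_succ (n + 1)]
    push_cast
    field_simp
    ring
  have hL : L / (n + 1)! ≤ √2 ^ n * (M / (n + 1)!) :=
    calc (L : ℝ) / (n + 1)! ≤ 1 * (M / (n + 1)!) := by rw [one_mul]; gcongr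
      _ ≤ √2 ^ n * (M / (n + 1)!) := by
        gcongr
        exact one_le_pow₀ (Real.one_le_sqrt.2 one_le_two)
  linarith

theorem gradient_bound_at_model_stationary_point_general [CompleteSpace X] [CompleteSpace Y]
    {p : ℕ} (hp : 1 ≤ p) {L : ℝ≥0} {M : ℝ} (hLM : L ≤ M) {g : WithLp 2 (X × Y) → ℝ}
    (hg : ContDiff ℝ p g) (hL : LipschitzWith L (iteratedFDeriv ℝ p g)) {z w : WithLp 2 (X × Y)}
    (hw : gradient (saddleTaylorModel p (M * √2 ^ (p - 1) / (p + 1)!) g z) w = 0) :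
    ‖gradient g w‖ ^ 2 ≤
      2 ^ (p + 1) * (M / p !) ^ 2 * (‖w.fst - z.fst‖ ^ 2 + ‖w.snd - z.snd‖ ^ 2) ^ p := by
  obtain ⟨n, rfl⟩ := Nat.exists_eq_add_of_le' hp
  have hnorm : ‖gradient g w‖ ≤ 2 * √2 ^ n * (M / (n + 1)!) * ‖w - z‖ ^ (n + 1) := by
    refine (norm_gradient_le_of_gradient_saddleTaylorModel_eq_zero hg hL hw).trans ?_
    gcongr
    exact add_saddle_coeff_le hLM
  have hsqrt : (√2 ^ n) ^ 2 = 2 ^ n := by rw [pow_right_comm, Real.sq_sqrt zero_le_two]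
  calc ‖gradient g w‖ ^ 2 ≤ (2 * √2 ^ n * (M / (n + 1)!) * ‖w - z‖ ^ (n + 1)) ^ 2 := by gcongr
    _ = 4 * (√2 ^ n) ^ 2 * (M / (n + 1)!) ^ 2 * (‖w - z‖ ^ 2) ^ (n + 1) := by ring
    _ = _ := by
      rw [hsqrt, WithLp.prod_norm_sq_eq_of_L2, WithLp.sub_fst, WithLp.sub_snd]
      ring

end Saddle

/-- Inequality (17) in the paper's saddle-point version of Lemma 5.2: at a stationary point
`(x̃,ỹ)` of the regularized Taylor model `Ω_{(x,y),p,M}` with `M ≥ L_p`, the gradient of `g`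
satisfies `‖∇g(x̃,ỹ)‖² ≤ 2^{p+1} M² (‖x̃ − x‖² + ‖ỹ − y‖²)^p`. -/
theorem gradient_bound_at_model_stationary_point {n m : ℕ} (p : ℕ) (hp : 2 ≤ p)
    (Lp M : ℝ) (hLp : 0 < Lp) (hM : Lp ≤ M)
    (g : WithLp 2 (EuclideanSpace ℝ (Fin n) × EuclideanSpace ℝ (Fin m)) → ℝ)
    (hg : ContDiff ℝ (p : ℕ∞) g)
    (hLip : ∀ z₁ z₂, ‖iteratedFDeriv ℝ p g z₁ - iteratedFDeriv ℝ p g z₂‖ ≤ Lp * ‖z₁ - z₂‖)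
    (x xt : EuclideanSpace ℝ (Fin n)) (y yt : EuclideanSpace ℝ (Fin m))
    (hstat : gradient (omegaModel p M g x y) (mkZ xt yt) = 0) :
    ‖gradient g (mkZ xt yt)‖ ^ 2
      ≤ 2 ^ (p + 1) * M ^ 2 * (‖xt - x‖ ^ 2 + ‖yt - y‖ ^ 2) ^ p := by
  have hM₀ : 0 ≤ M := hLp.le.trans hM
  have hbound := gradient_bound_at_model_stationary_point_general (z := mkZ x y) (w := mkZ xt yt)
    (one_le_two.trans hp) (L := ⟨Lp, hLp.le⟩) hM hg (lipschitzWith_iff_norm_sub_le.2 hLip) hstat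
  calc ‖gradient g (mkZ xt yt)‖ ^ 2
      ≤ 2 ^ (p + 1) * (M / p !) ^ 2 * (‖xt - x‖ ^ 2 + ‖yt - y‖ ^ 2) ^ p := hbound
    _ ≤ 2 ^ (p + 1) * M ^ 2 * (‖xt - x‖ ^ 2 + ‖yt - y‖ ^ 2) ^ p := by
        gcongr
        exact div_le_self hM₀ (Nat.one_le_cast.2 p.factorial_pos)
end

section
/- Let p ≥ 2 and let g : ℝ^n × ℝ^m → ℝ be p times continuously differentiable with L_p-Lipschitz p-th derivative, and let M ≥ √2 · p · L_p. Fix (x,y) ∈ ℝ^n × ℝ^m and define Ω_{(x,y),p,M} as the regularized Taylor model Ω_{(x,y),p,M}(x̂,ŷ) = Φ_{(x,y),p}(x̂,ŷ) + (M(√2)^{p−1}/(p+1)!)‖x̂ − x‖₂^{p+1} − (M(√2)^{p−1}/(p+1)!)‖ŷ − y‖₂^{p+1}. Suppose (x̃,ỹ) is a saddle point of Ω_{(x,y),p,M}: Ω_{(x,y),p,M}(x̃, y') ≤ Ω_{(x,y),p,M}(x̃, ỹ) ≤ Ω_{(x,y),p,M}(x', ỹ) for all x' ∈ ℝ^n,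 y' ∈ ℝ^m. Then g(x, ỹ) − g(x̃, y) ≥ (M/(p·(p+1)!)) · (‖x̃ − x‖₂^{p+1} + ‖ỹ − y‖₂^{p+1}). -/
/-
Taylor's formula with integral remainder bounds the difference between `g` and its Taylor polynomial
at `(x, y)` by `L_p / (p + 1)! * ‖·‖ ^ (p + 1)`. At `(x̃, y)` only the first regularization term of
`Ω` is non-zero and at `(x, ỹ)` only the second, so `Ω` overestimates `g` at the former point and
underestimates it at the latter, by at least `c - L_p / (p + 1)!` times the respective power of the
distance, where `c` is the weight of the regularization. The saddle point gives
`Ω(x̃, y) ≤ Ω(x, ỹ)`.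
-/

open scoped ENNReal Nat

section Taylor

open MeasureTheory

variable {E F : Type*} [NormedAddCommGroup E] [NormedSpace ℝ E]
  [NormedAddCommGroup F] [NormedSpace ℝ F]

/-- The Taylor polynomial of degree `n` of `f` at `a`, as a function of the evaluation point `b`
(not of the increment `b - a`). It generalizes `taylorPoly` to arbitrary normed spaces. -/
noncomputable def taylorEval (n : ℕ) (f : E → F) (a b : E) : F :=
  ∑ k ∈ Finset.range (n + 1), (1 / (k ! : ℝ)) • iteratedFDeriv ℝ k f a (fun _ => b - a)

theorem integral_one_sub_pow (n : ℕ) : ∫ t in (0 : ℝ)..1, (1 - t) ^ n = 1 / (n + 1) := by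
  simpa using intervalIntegral.integral_comp_sub_left (fun t : ℝ => t ^ n) 1 (a := 0) (b := 1)

theorem integral_one_sub_pow_mul_self (n : ℕ) :
    ∫ t in (0 : ℝ)..1, (1 - t) ^ n * t = 1 / ((n + 1) * (n + 2)) := by
  have hsub (t : ℝ) : (1 - t) ^ n * t = (1 - t) ^ n - (1 - t) ^ (n + 1) := by ring
  have hint (k : ℕ) : IntervalIntegrable (fun t : ℝ => (1 - t) ^ k) volume 0 1 :=
    Continuous.intervalIntegrable (by fun_prop) 0 1
  simp_rw [hsub]
  rw [intervalIntegral.integral_sub (hint n) (hint (n + 1)), integral_one_sub_pow,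
    integral_one_sub_pow]
  push_cast
  field_simp
  ring

theorem sub_taylorEval_succ_eq_integral [CompleteSpace F] {n : ℕ} {f : E → F}
    (hf : ContDiff ℝ (n + 1) f) (a b : E) :
    f b - taylorEval (n + 1) f a b = (n ! : ℝ)⁻¹ • ∫ t in (0 : ℝ)..1, (1 - t) ^ n •
      (iteratedFDeriv ℝ (n + 1) f (a + t • (b - a)) - iteratedFDeriv ℝ (n + 1) f a)
        (fun _ => b - a) := by
  have htaylor := map_add_eq_sum_add_integral_iteratedFDeriv (x := a) (y := b - a)
    fun t _ => hf.contDiffAt (x := a + t • (b - a))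
  have hcont : Continuous (iteratedFDeriv ℝ (n + 1) f) :=
    hf.continuous_iteratedFDeriv (by norm_cast)
  simp only [sub_apply, smul_sub ((1 - _ : ℝ) ^ n)]
  rw [intervalIntegral.integral_sub (Continuous.intervalIntegrable (by fun_prop) 0 1)
      (Continuous.intervalIntegrable (by fun_prop) 0 1),
    intervalIntegral.integral_smul_const, integral_one_sub_pow, smul_sub, smul_smul]
  rw [add_sub_cancel] at htaylor
  have hfac : (n ! : ℝ)⁻¹ * (1 / (n + 1)) = 1 / ((n + 1)! : ℝ) := by
    rw [Nat.factorial_succ]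
    push_cast
    field_simp
  rw [hfac, taylorEval, Finset.sum_range_succ, htaylor]
  simp only [one_div, add_sub_add_left_eq_sub]

theorem norm_sub_taylorEval_le [CompleteSpace F] {n : ℕ} {f : E → F} {L : ℝ} {a : E}
    (hf : ContDiff ℝ n f)
    (hLip : ∀ v, ‖iteratedFDeriv ℝ n f v - iteratedFDeriv ℝ n f a‖ ≤ L * ‖v - a‖) (b : E) :
    ‖f b - taylorEval n f a b‖ ≤ L / (n + 1)! * ‖b - a‖ ^ (n + 1) := by
  cases n with
  | zero =>
    simpa [taylorEval] using ContinuousMultilinearMap.le_of_opNorm_le (hLip b) fun _ => b - a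
  | succ n =>
    have hintegrand : ∀ t ∈ Set.Ioc (0 : ℝ) 1, ‖(1 - t) ^ n •
        (iteratedFDeriv ℝ (n + 1) f (a + t • (b - a)) - iteratedFDeriv ℝ (n + 1) f a)
          (fun _ => b - a)‖ ≤ (1 - t) ^ n * t * (L * ‖b - a‖ ^ (n + 2)) := by
      intro t ht
      have hbase := hLip (a + t • (b - a))
      rw [add_sub_cancel_left, norm_smul, Real.norm_of_nonneg ht.1.le] at hbase
      have hpow : 0 ≤ (1 - t) ^ n := pow_nonneg (sub_nonneg.2 ht.2) n
      have happly := ContinuousMultilinearMap.le_of_opNorm_le hbase fun _ => b - a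
      rw [Fin.prod_const] at happly
      rw [norm_smul, Real.norm_of_nonneg hpow]
      exact (mul_le_mul_of_nonneg_left happly hpow).trans_eq (by ring)
    have hintegral := intervalIntegral.norm_integral_le_of_norm_le (μ := volume)
      zero_le_one (.of_forall hintegrand) (Continuous.intervalIntegrable (by fun_prop) 0 1)
    rw [intervalIntegral.integral_mul_const, integral_one_sub_pow_mul_self] at hintegral
    rw [sub_taylorEval_succ_eq_integral (mod_cast hf), norm_smul,
      Real.norm_of_nonneg (by positivity)]
    refine (mul_le_mul_of_nonneg_left hintegral (by positivity)).trans_eq ?_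
    rw [Nat.factorial_succ (n + 1), Nat.factorial_succ n]
    push_cast
    field_simp
    ring

end Taylor

section SaddleModel

variable {E F : Type*} [NormedAddCommGroup E] [NormedSpace ℝ E]
  [NormedAddCommGroup F] [NormedSpace ℝ F] {q : ℝ≥0∞} [Fact (1 ≤ q)]

/-- The Taylor model of `g` at `(x, y)`, regularized with weight `c` to be minimized in the first
and maximized in the second variable. It generalizes `omegaModel`, whose weight is
`M * √2 ^ (p - 1) / (p + 1)!`, to arbitrary weights, normed spaces and `L^q` product norms. -/
noncomputable def saddleModel (p : ℕ) (c : ℝ) (g : WithLp q (E × F) → ℝ) (x : E) (y : F)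
    (w : WithLp q (E × F)) : ℝ :=
  taylorEval p g (.toLp q (x, y)) w + c * ‖w.fst - x‖ ^ (p + 1) - c * ‖w.snd - y‖ ^ (p + 1)

variable {p : ℕ} {c L : ℝ} {g : WithLp q (E × F) → ℝ} {x : E} {y : F}

theorem add_le_saddleModel_toLp_fst (hg : ContDiff ℝ p g)
    (hLip : ∀ v, ‖iteratedFDeriv ℝ p g v - iteratedFDeriv ℝ p g (.toLp q (x, y))‖
      ≤ L * ‖v - .toLp q (x, y)‖) (x' : E) :
    g (.toLp q (x', y)) + (c - L / (p + 1)!) * ‖x' - x‖ ^ (p + 1)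
      ≤ saddleModel p c g x y (.toLp q (x', y)) := by
  have hdist : ‖WithLp.toLp q (x', y) - .toLp q (x, y)‖ = ‖x' - x‖ := by
    rw [← WithLp.toLp_sub, Prod.mk_sub_mk, sub_self, WithLp.norm_toLp_fst]
  have htaylor := norm_sub_taylorEval_le hg hLip (.toLp q (x', y))
  rw [hdist, Real.norm_eq_abs, abs_le] at htaylor
  rw [saddleModel, WithLp.toLp_fst, WithLp.toLp_snd, sub_self, norm_zero, zero_pow p.succ_ne_zero]
  linarith

theorem saddleModel_toLp_snd_add_le (hg : ContDiff ℝ p g)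
    (hLip : ∀ v, ‖iteratedFDeriv ℝ p g v - iteratedFDeriv ℝ p g (.toLp q (x, y))‖
      ≤ L * ‖v - .toLp q (x, y)‖) (y' : F) :
    saddleModel p c g x y (.toLp q (x, y')) + (c - L / (p + 1)!) * ‖y' - y‖ ^ (p + 1)
      ≤ g (.toLp q (x, y')) := by
  have hdist : ‖WithLp.toLp q (x, y') - .toLp q (x, y)‖ = ‖y' - y‖ := by
    rw [← WithLp.toLp_sub, Prod.mk_sub_mk, sub_self, WithLp.norm_toLp_snd]
  have htaylor := norm_sub_taylorEval_le hg hLip (.toLp q (x, y'))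
  rw [hdist, Real.norm_eq_abs, abs_le] at htaylor
  rw [saddleModel, WithLp.toLp_fst, WithLp.toLp_snd, sub_self, norm_zero, zero_pow p.succ_ne_zero]
  linarith

theorem model_saddle_gap_lower_bound_general (hg : ContDiff ℝ p g)
    (hLip : ∀ v, ‖iteratedFDeriv ℝ p g v - iteratedFDeriv ℝ p g (.toLp q (x, y))‖
      ≤ L * ‖v - .toLp q (x, y)‖) {x' : E} {y' : F}
    (hle : saddleModel p c g x y (.toLp q (x', y)) ≤ saddleModel p c g x y (.toLp q (x, y'))) :
    (c - L / (p + 1)!) * (‖x' - x‖ ^ (p + 1) + ‖y' - y‖ ^ (p + 1))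
      ≤ g (.toLp q (x, y')) - g (.toLp q (x', y)) := by
  linarith [add_le_saddleModel_toLp_fst (c := c) hg hLip x',
    saddleModel_toLp_snd_add_le (c := c) hg hLip y']

end SaddleModel

theorem omegaModel_eq_saddleModel {n m : ℕ} (p : ℕ) (M : ℝ)
    (g : WithLp 2 (EuclideanSpace ℝ (Fin n) × EuclideanSpace ℝ (Fin m)) → ℝ)
    (x : EuclideanSpace ℝ (Fin n)) (y : EuclideanSpace ℝ (Fin m)) :
    omegaModel p M g x y = saddleModel p (M * √2 ^ (p - 1) / (p + 1)!) g x y :=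
  rfl

theorem div_le_regularization_weight_sub {p : ℕ} (hp : 2 ≤ p) {L M : ℝ} (hL : 0 ≤ L)
    (hM : √2 * p * L ≤ M) :
    M / (p * (p + 1)!) ≤ M * √2 ^ (p - 1) / (p + 1)! - L / (p + 1)! := by
  have hp' : (2 : ℝ) ≤ p := mod_cast hp
  have hsqrt : 1 ≤ √2 := Real.one_le_sqrt.2 one_le_two
  have hM₀ : 0 ≤ M := le_trans (by positivity) hM
  have hLM : L ≤ M / p := by
    rw [le_div_iff₀' (by positivity)]
    calc p * L ≤ √2 * (p * L) := le_mul_of_one_le_left (by positivity) hsqrt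
      _ ≤ M := by rwa [← mul_assoc]
  have hhalf : M / p ≤ M / 2 := by gcongr
  have hpow : M ≤ M * √2 ^ (p - 1) := le_mul_of_one_le_right hM₀ (one_le_pow₀ hsqrt)
  rw [← div_div, ← sub_div]
  gcongr
  linarith

/-- Inequality (20) in the paper's saddle-point version of Lemma 5.2: if `M ≥ √2 p L_p` and
`(x̃,ỹ)` is a saddle point of the regularized Taylor model `Ω_{(x,y),p,M}`, then
`g(x, ỹ) − g(x̃, y) ≥ (M/(p (p+1)!)) (‖x̃ − x‖^{p+1} + ‖ỹ − y‖^{p+1})`. -/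
theorem model_saddle_gap_lower_bound {n m : ℕ} (p : ℕ) (hp : 2 ≤ p)
    (Lp M : ℝ) (hLp : 0 < Lp) (hM : Real.sqrt 2 * p * Lp ≤ M)
    (g : WithLp 2 (EuclideanSpace ℝ (Fin n) × EuclideanSpace ℝ (Fin m)) → ℝ)
    (hg : ContDiff ℝ (p : ℕ∞) g)
    (hLip : ∀ z₁ z₂, ‖iteratedFDeriv ℝ p g z₁ - iteratedFDeriv ℝ p g z₂‖ ≤ Lp * ‖z₁ - z₂‖)
    (x xt : EuclideanSpace ℝ (Fin n)) (y yt : EuclideanSpace ℝ (Fin m))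
    (hsaddle : ∀ (x' : EuclideanSpace ℝ (Fin n)) (y' : EuclideanSpace ℝ (Fin m)),
      omegaModel p M g x y (mkZ xt y') ≤ omegaModel p M g x y (mkZ xt yt) ∧
      omegaModel p M g x y (mkZ xt yt) ≤ omegaModel p M g x y (mkZ x' yt)) :
    g (mkZ x yt) - g (mkZ xt y)
      ≥ M / (p * (Nat.factorial (p + 1) : ℝ)) * (‖xt - x‖ ^ (p + 1) + ‖yt - y‖ ^ (p + 1)) := by
  simp only [omegaModel_eq_saddleModel] at hsaddle
  exact (mul_le_mul_of_nonneg_right (div_le_regularization_weight_sub hp hLp.le hM)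
    (by positivity)).trans (model_saddle_gap_lower_bound_general hg (hLip · _)
      ((hsaddle x y).1.trans (hsaddle x y).2))
end
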